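/- For every ε > 0 there exists a time horizon T and a sequence of valuations (s_t,b_t) ∈ [0,1]^2 such that the best revenue-nonnegative distribution γ* over price pairs satisfies E_{(p,q)∼γ*}[Σ_{t=1}^T GFT_t(p,q)] ≥ (2 − ε)·max_{p∈[0,1]} Σ_{t=1}^T GFT_t(p,p). Concretely, take (s_t,b_t) = (0, 1/2 − ε') for odd t and (1/2 + ε', 1) for even t, for a suitably small ε' > 0. -/

import Mathlib

open Finset MeasureTheory

noncomputable def gft (s b p q : ℝ) : ℝ :=
  (if s ≤ p then (1:ℝ) else 0) * (if q ≤ b then (1:ℝ) else 0) * (b - s)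

noncomputable def rev (s b p q : ℝ) : ℝ :=
  (if s ≤ p then (1:ℝ) else 0) * (if q ≤ b then (1:ℝ) else 0) * (q - p)

/-- The probability measure that puts mass `a` on `x` and mass `1 - a` on `y`. -/
noncomputable def twoPoint (a : ℝ) (x y : ℝ × ℝ) : Measure (ℝ × ℝ) :=
  ENNReal.ofReal a • Measure.dirac x + ENNReal.ofReal (1 - a) • Measure.dirac y

theorem isProbabilityMeasure_twoPoint {a : ℝ} (h0 : 0 ≤ a) (h1 : a ≤ 1) (x y : ℝ × ℝ) :
    IsProbabilityMeasure (twoPoint a x y) := by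
  constructor
  simp [twoPoint, ← ENNReal.ofReal_add h0 (sub_nonneg.2 h1)]

theorem twoPoint_setOf_not_eq_zero (a : ℝ) {x y : ℝ × ℝ} {P : ℝ × ℝ → Prop} (hx : P x)
    (hy : P y) : twoPoint a x y {z | ¬ P z} = 0 := by
  simp [twoPoint, Measure.dirac_apply, hx, hy]

theorem integral_twoPoint {a : ℝ} (h0 : 0 ≤ a) (h1 : a ≤ 1) (x y : ℝ × ℝ) (f : ℝ × ℝ → ℝ) :
    ∫ z, f z ∂(twoPoint a x y) = a * f x + (1 - a) * f y := by
  have hx : Integrable f (ENNReal.ofReal a • Measure.dirac x) :=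
    (integrable_dirac (by simp)).smul_measure ENNReal.ofReal_ne_top
  have hy : Integrable f (ENNReal.ofReal (1 - a) • Measure.dirac y) :=
    (integrable_dirac (by simp)).smul_measure ENNReal.ofReal_ne_top
  rw [twoPoint, integral_add_measure hx hy, integral_smul_measure, integral_smul_measure,
    integral_dirac, integral_dirac, ENNReal.toReal_ofReal h0,
    ENNReal.toReal_ofReal (sub_nonneg.2 h1), smul_eq_mul, smul_eq_mul]

/-- The factor `2` between the best feasible distribution and the best fixed
price is tight: for every `ε > 0` there is a valuation sequence and a feasible
distribution extracting at least `(2−ε)` times the best fixed price's GFT. -/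
theorem stmt_15 (ε : ℝ) (hε : 0 < ε) :
    ∃ (T : ℕ) (s b : ℕ → ℝ), 0 < T ∧
      (∀ t, s t ∈ Set.Icc (0:ℝ) 1 ∧ b t ∈ Set.Icc (0:ℝ) 1) ∧
      ∃ γ : Measure (ℝ × ℝ), IsProbabilityMeasure γ ∧
        γ {pq : ℝ × ℝ | ¬ (pq.1 ∈ Set.Icc (0:ℝ) 1 ∧ pq.2 ∈ Set.Icc (0:ℝ) 1)} = 0 ∧
        0 ≤ ∫ pq, (∑ t ∈ range T, rev (s t) (b t) pq.1 pq.2) ∂γ ∧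
        ∀ p ∈ Set.Icc (0:ℝ) 1,
          (2 - ε) * ∑ t ∈ range T, gft (s t) (b t) p p ≤
            ∫ pq, (∑ t ∈ range T, gft (s t) (b t) pq.1 pq.2) ∂γ := by
  obtain ⟨e, he0, he1, heε⟩ : ∃ e : ℝ, 0 < e ∧ e ≤ 1 / 8 ∧ 8 * e ≤ ε :=
    ⟨min ε 1 / 8, by positivity, by linarith [min_le_right ε 1], by linarith [min_le_left ε 1]⟩
  have hD : 0 < 1 + 6 * e := by linarith
  obtain ⟨a, ha⟩ : ∃ a : ℝ, a = (1 - 2 * e) / (1 + 6 * e) := ⟨_, rfl⟩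
  have haD : a * (1 + 6 * e) = 1 - 2 * e := by rw [ha]; field_simp
  have ha0 : 0 ≤ a := by rw [ha]; exact div_nonneg (by linarith) hD.le
  have ha1 : a ≤ 1 := by rw [ha, div_le_one hD]; linarith
  have haε : 1 - ε ≤ a := by nlinarith
  refine ⟨2, fun t => if Even t then 0 else 1 / 2 + e, fun t => if Even t then 1 / 2 - e else 1,
    two_pos, fun t => ?_, twoPoint a (1 / 2 + e, 1 / 2 - e) (0, 1 / 2 - e),
    isProbabilityMeasure_twoPoint ha0 ha1 _ _, twoPoint_setOf_not_eq_zero a ?_ ?_, ?_, ?_⟩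
  · dsimp only
    split_ifs <;> refine ⟨⟨?_, ?_⟩, ?_, ?_⟩ <;> linarith
  · refine ⟨⟨?_, ?_⟩, ?_, ?_⟩ <;> dsimp only <;> linarith
  · refine ⟨⟨?_, ?_⟩, ?_, ?_⟩ <;> dsimp only <;> linarith
  · have h1 : (0 : ℝ) ≤ 1 / 2 + e := by linarith
    have h2 : 1 / 2 - e ≤ 1 := by linarith
    have h3 : ¬ 1 / 2 + e ≤ 0 := by linarith
    rw [integral_twoPoint ha0 ha1]
    simp only [sum_range_succ, range_zero, sum_empty, rev, Even.zero, Nat.not_even_one, if_true,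
      if_false, h1, h2, h3, le_refl]
    linarith
  · intro p hp
    have h1 : (0 : ℝ) ≤ 1 / 2 + e := by linarith
    have h2 : 1 / 2 - e ≤ 1 := by linarith
    have h3 : ¬ 1 / 2 + e ≤ 0 := by linarith
    rw [integral_twoPoint ha0 ha1]
    simp only [sum_range_succ, range_zero, sum_empty, gft, Even.zero, Nat.not_even_one, if_true,
      if_false, h1, h2, h3, le_refl, hp.1, hp.2]
    split_ifs <;> nlinarith
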